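/- arXiv:1609.09364 — 3 statements merged into one kernel-verified Lean document; each statement's English description precedes it below -/
import Mathlib

section
/- Let Γ be a nonempty finite set and N a quadratic normalisation on Γ satisfying Condition (home). Then the monoid generated by the Mealy automaton M_{Γ,N} is a quotient of the semigroup presented by (Γ,N); precisely, for all nonempty words u, v over Γ, if (u, v) lies in the monoid congruence on Γ* generated by the pairs (ab, N̄(ab)) for a, b ∈ Γ, then the production functions σ_u and σ_v are equal as functions Γ* → Γ*. In particular, for all a, b, c, d ∈ Γ with N̄(ab) = N̄(cd), one has σ_b ∘ σ_a = σ_d ∘ σ_c. -/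
namespace Stmt1

variable {α : Type}

/-- Apply the two-letter normalisation `nf` at (1-indexed) position `i` of a word. -/
def applyAtL (nf : α → α → List α) : ℕ → List α → List α
  | 1, x :: y :: s => nf x y ++ s
  | n + 2, x :: s => x :: applyAtL nf (n + 1) s
  | _, w => w

/-- Apply the two-letter normalisation along a finite sequence of positions
(the first position in the list is applied first). -/
def seqApplyL (nf : α → α → List α) (l : List ℕ) (w : List α) : List α :=
  l.foldl (fun w i => applyAtL nf i w) w

/-- Production function of the Mealy automaton `M_{Γ,N}` with state `x`. -/
def prodFn (tau sig : α → α → α) : α → List α → List α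
  | _, [] => []
  | x, i :: s => sig x i :: prodFn tau sig (tau i x) s

/-- Production function of a word `u = x₁⋯xₙ`: `σ_u = σ_{xₙ} ∘ ⋯ ∘ σ_{x₁}`. -/
def prodWord (tau sig : α → α → α) : List α → List α → List α
  | [], s => s
  | x :: u, s => prodWord tau sig u (prodFn tau sig x s)

/-- The defining relations of the semigroup presented by `(Γ,N)`:
the pairs `(ab, N̄(ab))` for `a, b ∈ Γ`. -/
def quadRel (N : List α → List α) : FreeMonoid α → FreeMonoid α → Prop :=
  fun x y => ∃ a b : α,
    FreeMonoid.toList x = [a, b] ∧ FreeMonoid.toList y = N [a, b]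

theorem prodWord_append (tau sig : α → α → α) (u v s : List α) :
    prodWord tau sig (u ++ v) s = prodWord tau sig v (prodWord tau sig u s) := by
  induction u generalizing s with
  | nil => rfl
  | cons x u ih => exact ih _

/-- If `N̄(ab) = N̄(cd)`, then the production functions of `ab` and `cd` agree, as soon as `N`
absorbs the normalisation of suffixes and is computed by `N̄₁₂₁` on words of length three. -/
theorem prodFn_prodFn_eq_of_normalisation_eq (N : List α → List α) (tau sig : α → α → α)
    (habs : ∀ x a b : α, N (x :: N [a, b]) = N [x, a, b])
    (hNbar : ∀ x y : α, N [x, y] = [tau x y, sig y x])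
    (hhome : ∀ x y z : α,
      N [x, y, z] = seqApplyL (fun a b => N [a, b]) [1, 2, 1] [x, y, z])
    (s : List α) {a b c d : α} (h : N [a, b] = N [c, d]) :
    prodFn tau sig b (prodFn tau sig a s) = prodFn tau sig d (prodFn tau sig c s) := by
  induction s generalizing a b c d with
  | nil => rfl
  | cons i s ih =>
    have key : N [i, a, b] = N [i, c, d] := by rw [← habs, ← habs i c d, h]
    rw [hhome, hhome i c d] at key
    simp only [seqApplyL, applyAtL, List.foldl, hNbar, List.cons_append, List.nil_append,
      List.cons.injEq, and_true] at key
    obtain ⟨h₁, h₂, h₃⟩ := key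
    simp only [prodFn, h₃]
    rw [ih]
    rw [hNbar, hNbar, h₁, h₂]

/-- Proposition `prop-home`, direction `⇐`: for a quadratic
normalisation `(Γ,N)` satisfying Condition (home), the monoid generated by the Mealy
automaton `M_{Γ,N}` is a quotient of the semigroup presented by `(Γ,N)`; in particular
`N̄(ab) = N̄(cd)` implies `σ_b ∘ σ_a = σ_d ∘ σ_c`. -/
theorem mealy_monoid_quotient_of_presented
    {Γ : Type} [Fintype Γ] [Nonempty Γ]
    (N : List Γ → List Γ) (tau sig : Γ → Γ → Γ)
    (hlen : ∀ w : List Γ, (N w).length = w.length)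
    (hone : ∀ x : Γ, N [x] = [x])
    (habs : ∀ u w v : List Γ, w ≠ [] → N (u ++ N w ++ v) = N (u ++ w ++ v))
    (hquad₁ : ∀ w : List Γ, w ≠ [] →
      (N w = w ↔ ∀ p s : List Γ, ∀ x y : Γ, w = p ++ [x, y] ++ s → N [x, y] = [x, y]))
    (hquad₂ : ∀ w : List Γ, w ≠ [] →
      ∃ l : List ℕ, N w = seqApplyL (fun x y => N [x, y]) l w)
    (hNbar : ∀ x y : Γ, N [x, y] = [tau x y, sig y x])
    (hhome : ∀ x y z : Γ,
      N [x, y, z] = seqApplyL (fun a b => N [a, b]) [1, 2, 1] [x, y, z] ∧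
      N [x, y, z] = seqApplyL (fun a b => N [a, b]) [2, 1, 2, 1] [x, y, z]) :
    (∀ u v : List Γ, u ≠ [] → v ≠ [] →
        conGen (quadRel N) (FreeMonoid.ofList u) (FreeMonoid.ofList v) →
        prodWord tau sig u = prodWord tau sig v) ∧
    (∀ a b c d : Γ, N [a, b] = N [c, d] →
        ∀ s : List Γ, prodFn tau sig b (prodFn tau sig a s) =
          prodFn tau sig d (prodFn tau sig c s)) := by
  have habs' : ∀ x a b : Γ, N (x :: N [a, b]) = N [x, a, b] := fun x a b => by
    simpa using habs [x] [a, b] [] (by simp)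
  have idem : ∀ a b : Γ, N (N [a, b]) = N [a, b] := fun a b => by
    simpa using habs [] [a, b] [] (by simp)
  have pair : ∀ a b c d : Γ, N [a, b] = N [c, d] → ∀ s : List Γ,
      prodFn tau sig b (prodFn tau sig a s) = prodFn tau sig d (prodFn tau sig c s) :=
    fun a b c d h s => prodFn_prodFn_eq_of_normalisation_eq N tau sig habs' hNbar
      (fun x y z => (hhome x y z).1) s h
  refine ⟨fun u v _ _ huv => ?_, pair⟩
  have main : ∀ x y : FreeMonoid Γ, ConGen.Rel (quadRel N) x y → ∀ s : List Γ,
      prodWord tau sig (FreeMonoid.toList x) s = prodWord tau sig (FreeMonoid.toList y) s := by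
    intro x y hxy
    induction hxy with
    | of x y hr =>
      obtain ⟨a, b, hx, hy⟩ := hr
      intro s
      rw [hx, hy, hNbar]
      exact pair _ _ _ _ (by rw [← hNbar a b, idem]) s
    | refl x => exact fun _ => rfl
    | symm _ ih => exact fun s => (ih s).symm
    | trans _ _ ih₁ ih₂ => exact fun s => (ih₁ s).trans (ih₂ s)
    | mul _ _ ih₁ ih₂ =>
      intro s
      rw [FreeMonoid.toList_mul, FreeMonoid.toList_mul, prodWord_append, prodWord_append, ih₁, ih₂]
  exact funext (main _ _ huv)

end Stmt1
end

section
/- Let Γ be a nonempty finite set and N a quadratic normalisation on Γ satisfying Condition (home). Define the one-step rewriting relation → on words over Γ by: u → v iff there exist words p, s and letters a, b ∈ Γ with u = p ++ [a, b] ++ s, N̄(ab) ≠ ab, and v = p ++ N̄(ab) ++ s. Then the rewriting system is convergent; in particular it is terminating: there is no infinite sequence w₀ → w₁ → w₂ → ⋯ (the converse of → is well-founded). -/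
namespace Stmt7

variable {α : Type}

/-- Apply the two-letter normalisation `nf` at (1-indexed) position `i` of a word. -/
def applyAtL (nf : α → α → List α) : ℕ → List α → List α
  | 1, x :: y :: s => nf x y ++ s
  | n + 2, x :: s => x :: applyAtL nf (n + 1) s
  | _, w => w

/-- Apply the two-letter normalisation along a finite sequence of positions
(the first position in the list is applied first). -/
def seqApplyL (nf : α → α → List α) (l : List ℕ) (w : List α) : List α :=
  l.foldl (fun w i => applyAtL nf i w) w

/-- The one-step rewriting relation associated with a quadratic normalisation:
replace some non-normal length-two factor `ab` by `N̄(ab)`. -/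
def Rw (N : List α → List α) (u v : List α) : Prop :=
  ∃ (p s : List α) (x y : α),
    u = p ++ [x, y] ++ s ∧ N [x, y] ≠ [x, y] ∧ v = p ++ N [x, y] ++ s

/-- The properties of a quadratic normalisation satisfying Condition (home) from which convergence
is derived. -/
structure IsDominoNormalisation (N : List α → List α) : Prop where
  length_eq : ∀ w, (N w).length = w.length
  single : ∀ x, N [x] = [x]
  absorb : ∀ u w v, N (u ++ N w ++ v) = N (u ++ w ++ v)
  normal_iff : ∀ w, N w = w ↔ w.IsChain (fun x y => N [x, y] = [x, y])
  domino : ∀ a c z y z' a' y', N [a, c] = [a, c] → N [c, z] = [y, z'] →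
    N [a, y] = [a', y'] → N [y', z'] = [y', z']

/-- `Splits N x s` says that prepending `x` to `s` does not affect the last letter of the
normal form of `s`, in the sense that `N (x :: s)` is obtained by normalising `x` with the remaining
letters of `N s`. -/
def Splits (N : List α → List α) (x : α) (s : List α) : Prop :=
  ∀ q z, N s = q ++ [z] → N (x :: s) = N (x :: q) ++ [z]

open Classical in
/-- The number of positions of a word at which `Splits` fails. -/
noncomputable def defect (N : List α → List α) : List α → ℕ
  | [] => 0
  | x :: s => (if Splits N x s then 0 else 1) + defect N s

theorem isChain_iff_forall_factor {R : α → α → Prop} (w : List α) :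
    w.IsChain R ↔ ∀ p s x y, w = p ++ [x, y] ++ s → R x y := by
  constructor
  · rintro h p s x y rfl
    have h' := (List.isChain_append.1 (List.isChain_append.1 h).1).2.1
    simpa using h'
  · induction w with
    | nil => simp
    | cons a w ih =>
      intro h
      cases w with
      | nil => simp
      | cons b w =>
        refine List.isChain_cons_cons.2 ⟨h [] w a b (by simp), ih fun p s x y e => ?_⟩
        exact h (a :: p) s x y (by simp [e])

theorem eq_append_singleton_of_length {w : List α} {n : ℕ} (h : w.length = n + 1) :
    ∃ q z, w = q ++ [z] ∧ q.length = n := by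
  rcases List.eq_nil_or_concat' w with rfl | ⟨q, z, rfl⟩
  · simp at h
  · exact ⟨q, z, rfl, by simpa using h⟩

namespace IsDominoNormalisation

variable {N : List α → List α}

theorem idem (h : IsDominoNormalisation N) (w : List α) : N (N w) = N w := by
  simpa using h.absorb [] w []

theorem absorb_left (h : IsDominoNormalisation N) (w v : List α) : N (N w ++ v) = N (w ++ v) := by
  simpa using h.absorb [] w v

theorem absorb_cons (h : IsDominoNormalisation N)
    (x : α) (w : List α) : N (x :: N w) = N (x :: w) := by
  simpa using h.absorb [x] w []

theorem exists_pair (h : IsDominoNormalisation N) (x y : α) : ∃ x' y', N [x, y] = [x', y'] :=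
  List.length_eq_two.1 (by simp [h.length_eq])

theorem exists_concat (h : IsDominoNormalisation N)
    {w : List α} (hw : w ≠ []) : ∃ q z, N w = q ++ [z] := by
  rcases List.eq_nil_or_concat' (N w) with e | e
  · have := h.length_eq w
    simp [e] at this
    exact absurd this.symm (by simpa using hw)
  · exact e

theorem normal_append_pair (h : IsDominoNormalisation N)
    {p : List α} {a b : α} (hp : N (p ++ [a]) = p ++ [a])
    (hab : N [a, b] = [a, b]) : N (p ++ [a, b]) = p ++ [a, b] := by
  rw [h.normal_iff] at hp ⊢
  rw [List.isChain_split]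
  exact ⟨hp, by simpa using hab⟩

theorem normal_left (h : IsDominoNormalisation N)
    {p s : List α} (hp : N (p ++ s) = p ++ s) : N p = p := by
  rw [h.normal_iff] at hp ⊢
  exact (List.isChain_append.1 hp).1

theorem normal_right (h : IsDominoNormalisation N)
    {p s : List α} (hp : N (p ++ s) = p ++ s) : N s = s := by
  rw [h.normal_iff] at hp ⊢
  exact (List.isChain_append.1 hp).2.1

theorem normal_domino (h : IsDominoNormalisation N)
    (v : List α) : ∀ (c z y z' : α), N (v ++ [c]) = v ++ [c] →
    N [c, z] = [y, z'] → N (N (v ++ [y]) ++ [z']) = N (v ++ [y]) ++ [z'] := by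
  induction v using List.reverseRecOn with
  | nil =>
    intro c z y z' _ hcz
    simp only [List.nil_append, h.single, List.singleton_append]
    rw [← hcz, h.idem]
  | append_singleton v a ih =>
    intro c z y z' hv hcz
    obtain ⟨a', y', hay⟩ := h.exists_pair a y
    have hac : N [a, c] = [a, c] := h.normal_right (p := v) (by simpa using hv)
    have hva : N (v ++ [a]) = v ++ [a] := h.normal_left hv
    have key : N (v ++ [a] ++ [y]) = N (v ++ [a']) ++ [y'] := by
      rw [← ih a y a' y' hva hay, h.absorb_left]
      have := h.absorb v [a, y] []
      rw [hay] at this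
      simpa using this.symm
    have hn : N (N (v ++ [a']) ++ [y']) = N (v ++ [a']) ++ [y'] := by rw [← key, h.idem]
    rw [key]
    simpa using h.normal_append_pair hn (h.domino a c z y z' a' y' hac hcz hay)

theorem append_letter (h : IsDominoNormalisation N)
    {u v : List α} {c z y z' : α} (hu : N u = v ++ [c])
    (hcz : N [c, z] = [y, z']) : N (u ++ [z]) = N (v ++ [y]) ++ [z'] := by
  have hv : N (v ++ [c]) = v ++ [c] := by rw [← hu, h.idem]
  rw [← h.normal_domino v c z y z' hv hcz, h.absorb_left, ← h.absorb_left u, hu]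
  have := h.absorb v [c, z] []
  rw [hcz] at this
  simpa using this.symm

theorem splits_of_normal (h : IsDominoNormalisation N)
    {x y : α} (hxy : N [x, y] = [x, y]) (v : List α) :
    Splits N x (y :: v) := by
  induction v using List.reverseRecOn with
  | nil =>
    intro q z hq
    rw [h.single] at hq
    obtain ⟨rfl, rfl⟩ : q = [] ∧ z = y := by
      cases q with
      | nil => simpa [eq_comm] using hq
      | cons => simp at hq
    simp [h.single, hxy]
  | append_singleton v z₀ ih =>
    intro q z hq
    obtain ⟨q₁, z₁, h₁⟩ := h.exists_concat (w := y :: v) (by simp)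
    obtain ⟨y₁, z₂, h₂⟩ := h.exists_pair z₁ z₀
    have e₁ := h.append_letter h₁ h₂
    have e₂ := h.append_letter (ih q₁ z₁ h₁) h₂
    rw [List.cons_append, hq] at e₁
    obtain ⟨rfl, e⟩ := List.append_inj' e₁ rfl
    obtain rfl : z = z₂ := by simpa using e
    rw [h.absorb_left] at e₂
    rw [h.absorb_cons]
    simpa using e₂

theorem splits_of_step (h : IsDominoNormalisation N)
    {x y x' y' : α} {t : List α} (hxy : N [x, y] = [x', y'])
    (hx : Splits N x (y :: t)) (hy : Splits N y t) : Splits N y' t := by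
  intro q z hq
  have hn : N [x', y'] = [x', y'] := by rw [← hxy, h.idem]
  obtain ⟨r, g, hr⟩ := h.exists_concat (w := y' :: q) (by simp)
  have e₁ := hx _ _ (hy q z hq)
  have e₂ : N (x :: y :: q) = N (x' :: y' :: q) := by
    have := h.absorb_left [x, y] q
    rw [hxy] at this
    simpa using this.symm
  rw [h.absorb_cons, e₂, h.splits_of_normal hn q r g hr] at e₁
  have hgz : N [g, z] = [g, z] := by
    refine h.normal_right (p := N (x' :: r)) ?_
    have := h.idem (x :: y :: t)
    rw [e₁] at this
    simpa using this
  have hrg : N (r ++ [g]) = r ++ [g] := by rw [← hr, h.idem]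
  calc N (y' :: t) = N (N (y' :: q) ++ [z]) := by
        rw [h.absorb_left, ← h.absorb_cons, hq, List.cons_append]
    _ = N (y' :: q) ++ [z] := by
        rw [hr]
        simpa using h.normal_append_pair hrg hgz

theorem splits_congr (h : IsDominoNormalisation N)
    {s t : List α} (hst : N s = N t) (x : α) : Splits N x s ↔ Splits N x t := by
  rw [Splits, Splits, hst, ← h.absorb_cons x s, ← h.absorb_cons x t, hst]

theorem eq_of_step (h : IsDominoNormalisation N) {u v : List α} (huv : Rw N u v) : N u = N v := by
  obtain ⟨p, s, x, y, rfl, -, rfl⟩ := huv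
  exact (h.absorb p [x, y] s).symm

theorem length_eq_of_step (h : IsDominoNormalisation N)
    {u v : List α} (huv : Rw N u v) : u.length = v.length := by
  rw [← h.length_eq u, h.eq_of_step huv, h.length_eq]

theorem defect_step_le (h : IsDominoNormalisation N) (p t : List α) (x y : α) :
    defect N (p ++ N [x, y] ++ t) ≤ defect N (p ++ [x, y] ++ t) := by
  induction p with
  | nil =>
    obtain ⟨x', y', hxy⟩ := h.exists_pair x y
    have hn : N [x', y'] = [x', y'] := by rw [← hxy, h.idem]
    have h₁ := h.splits_of_normal hn t
    have h₂ := h.splits_of_step (t := t) hxy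
    rw [hxy]
    simp only [List.nil_append, List.cons_append, defect, h₁, if_true]
    by_cases hx : Splits N x (y :: t) <;> by_cases hy : Splits N y t <;>
      by_cases hy' : Splits N y' t <;> (simp_all; try omega)
  | cons a p ih =>
    have := h.splits_congr (h.absorb p [x, y] t) a
    simp only [List.cons_append, defect]
    rw [propext this]
    exact Nat.add_le_add_left ih _

theorem defect_last_step_lt (h : IsDominoNormalisation N)
    (p : List α) {x y : α} (hxy : N [x, y] ≠ [x, y]) :
    defect N (p ++ N [x, y]) < defect N (p ++ [x, y]) := by
  induction p with
  | nil =>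
    obtain ⟨x', y', e⟩ := h.exists_pair x y
    have hn : N [x', y'] = [x', y'] := by rw [← e, h.idem]
    have hnil (z : α) : Splits N z [] := by
      intro q z hq
      have := h.length_eq []
      simp [hq] at this
    have h₁ := h.splits_of_normal hn []
    have h₂ : ¬ Splits N x [y] := fun hs => hxy (by simpa [h.single] using hs [] y (h.single y))
    rw [e]
    simp [defect, h₁, h₂, hnil]
  | cons a p ih =>
    have := h.splits_congr (s := p ++ N [x, y]) (t := p ++ [x, y])
      (by simpa using h.absorb p [x, y] []) a
    simp only [List.cons_append, defect]
    rw [propext this]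
    exact Nat.add_lt_add_left ih _

theorem step_append_letter (h : IsDominoNormalisation N)
    {u v : List α} {z : α} (huv : Rw N (u ++ [z]) v) :
    (∃ u', Rw N u u' ∧ v = u' ++ [z] ∧ defect N v ≤ defect N (u ++ [z])) ∨
      defect N v < defect N (u ++ [z]) := by
  obtain ⟨p, s, x, y, e, hxy, rfl⟩ := huv
  rcases List.eq_nil_or_concat' s with rfl | ⟨s, z', rfl⟩
  · right
    rw [e]
    simpa using h.defect_last_step_lt p hxy
  · left
    have hle := h.defect_step_le p (s ++ [z']) x y
    rw [← List.append_assoc] at e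
    obtain ⟨rfl, e'⟩ := List.append_inj' e rfl
    obtain rfl : z = z' := by simpa using e'
    exact ⟨p ++ N [x, y] ++ s, ⟨p, s, x, y, rfl, hxy, rfl⟩, by simp, by simpa using hle⟩

theorem acc_of_length (h : IsDominoNormalisation N) (n : ℕ) : ∀ w : List α, w.length = n →
    Acc (fun v u : List α => Rw N u v) w := by
  induction n with
  | zero =>
    intro w hw
    obtain rfl := List.length_eq_zero_iff.1 hw
    refine Acc.intro _ fun v ⟨p, s, x, y, e, _⟩ => ?_
    simp at e
  | succ n ihn =>
    suffices H : ∀ (b : ℕ) (u : List α) (z : α), u.length = n → defect N (u ++ [z]) = b →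
        Acc (fun v u : List α => Rw N u v) (u ++ [z]) by
      intro w hw
      obtain ⟨u, z, rfl, hu⟩ := eq_append_singleton_of_length hw
      exact H _ u z hu rfl
    intro b
    induction b using Nat.strong_induction_on with
    | _ b ihb =>
      intro u z hu
      induction ihn u hu with
      | intro u _ ihu =>
        rintro rfl
        refine Acc.intro _ fun v hv => ?_
        have of_lt (hlt : defect N v < defect N (u ++ [z])) :
            Acc (fun v u : List α => Rw N u v) v := by
          have hvl : v.length = n + 1 := by rw [← h.length_eq_of_step hv]; simp [hu]
          obtain ⟨u', z', rfl, hu'⟩ := eq_append_singleton_of_length hvl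
          exact ihb _ hlt u' z' hu' rfl
        rcases h.step_append_letter hv with ⟨u', hu', rfl, hle⟩ | hlt
        · rcases hle.lt_or_eq with hlt | heq
          · exact of_lt hlt
          · exact ihu u' hu' (by rw [← h.length_eq_of_step hu', hu]) heq
        · exact of_lt hlt

theorem wellFounded (h : IsDominoNormalisation N) : WellFounded (fun v u : List α => Rw N u v) :=
  ⟨fun w => h.acc_of_length _ w rfl⟩

theorem reduces_to_normal_form (h : IsDominoNormalisation N)
    (w : List α) : Relation.ReflTransGen (Rw N) w (N w) := by
  induction w using h.wellFounded.induction with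
  | _ w ih =>
    by_cases hw : N w = w
    · rw [hw]
    · rw [h.normal_iff, isChain_iff_forall_factor] at hw
      push Not at hw
      obtain ⟨p, s, x, y, rfl, hxy⟩ := hw
      have hstep : Rw N (p ++ [x, y] ++ s) (p ++ N [x, y] ++ s) := ⟨p, s, x, y, rfl, hxy, rfl⟩
      rw [h.eq_of_step hstep]
      exact (ih _ hstep).head hstep

theorem eq_of_reduces (h : IsDominoNormalisation N)
    {u v : List α} (huv : Relation.ReflTransGen (Rw N) u v) : N u = N v := by
  induction huv with
  | refl => rfl
  | tail _ hs ih => rw [ih, h.eq_of_step hs]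

end IsDominoNormalisation

/-- Theorem `thm-termination`: for a quadratic normalisation `(Γ,N)`
satisfying Condition (home), the associated rewriting system is convergent; in
particular it is terminating (the converse of the one-step rewriting relation is
well-founded), and it is confluent. -/
theorem rewriting_system_convergent
    {Γ : Type} [Fintype Γ] [Nonempty Γ]
    (N : List Γ → List Γ)
    (hlen : ∀ w : List Γ, (N w).length = w.length)
    (hone : ∀ x : Γ, N [x] = [x])
    (habs : ∀ u w v : List Γ, w ≠ [] → N (u ++ N w ++ v) = N (u ++ w ++ v))
    (hquad₁ : ∀ w : List Γ, w ≠ [] →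
      (N w = w ↔ ∀ p s : List Γ, ∀ x y : Γ, w = p ++ [x, y] ++ s → N [x, y] = [x, y]))
    (hquad₂ : ∀ w : List Γ, w ≠ [] →
      ∃ l : List ℕ, N w = seqApplyL (fun x y => N [x, y]) l w)
    (hhome : ∀ x y z : Γ,
      N [x, y, z] = seqApplyL (fun a b => N [a, b]) [1, 2, 1] [x, y, z] ∧
      N [x, y, z] = seqApplyL (fun a b => N [a, b]) [2, 1, 2, 1] [x, y, z]) :
    WellFounded (fun v u : List Γ => Rw N u v) ∧
    (∀ u v w : List Γ, Relation.ReflTransGen (Rw N) u v →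
      Relation.ReflTransGen (Rw N) u w →
      ∃ z : List Γ, Relation.ReflTransGen (Rw N) v z ∧
        Relation.ReflTransGen (Rw N) w z) := by
  have hnil : N [] = [] := List.length_eq_zero_iff.1 (by simp [hlen])
  have habs' : ∀ u w v : List Γ, N (u ++ N w ++ v) = N (u ++ w ++ v) := by
    intro u w v
    by_cases hw : w = []
    · rw [hw, hnil]
    · exact habs u w v hw
  have hnormal : ∀ w : List Γ, N w = w ↔ w.IsChain (fun x y => N [x, y] = [x, y]) := by
    intro w
    by_cases hw : w = []
    · simp [hw, hnil]
    · rw [hquad₁ w hw, isChain_iff_forall_factor]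
  have h : IsDominoNormalisation N := by
    refine ⟨hlen, hone, habs', hnormal, fun a c z y z' a' y' hac hcz hay => ?_⟩
    have e : N [a, c, z] = [a', y', z'] := by
      rw [(hhome a c z).1]
      simp [seqApplyL, applyAtL, hac, hcz, hay]
    have hn : N [a', y', z'] = [a', y', z'] := by
      rw [← e]
      simpa using habs' [] [a, c, z] []
    rw [hnormal] at hn ⊢
    exact (List.isChain_cons_cons.1 hn).2
  refine ⟨h.wellFounded, fun u v w huv huw => ⟨N u, ?_, ?_⟩⟩
  · rw [h.eq_of_reduces huv]
    exact h.reduces_to_normal_form v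
  · rw [h.eq_of_reduces huw]
    exact h.reduces_to_normal_form w

end Stmt7
end

section
/- Let Γ be a nonempty finite set and N a quadratic normalisation on Γ of breadth (3,4) or (4,3), i.e., for every length-three word w over Γ, N(w) = N̄_{212}(w) and N(w) = N̄_{1212}(w), or symmetrically N(w) = N̄_{121}(w) and N(w) = N̄_{2121}(w). Define the one-step rewriting relation → on words by: u → v iff u = p ++ [a, b] ++ s with N̄(ab) ≠ ab and v = p ++ N̄(ab) ++ s. Then every rewriting sequence starting from a word of length p has length at most 2^p − p − 1. -/
namespace Stmt9

variable {α : Type}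

/-- Apply the two-letter normalisation `nf` at (1-indexed) position `i` of a word. -/
def applyAtL (nf : α → α → List α) : ℕ → List α → List α
  | 1, x :: y :: s => nf x y ++ s
  | n + 2, x :: s => x :: applyAtL nf (n + 1) s
  | _, w => w

/-- Apply the two-letter normalisation along a finite sequence of positions
(the first position in the list is applied first). -/
def seqApplyL (nf : α → α → List α) (l : List ℕ) (w : List α) : List α :=
  l.foldl (fun w i => applyAtL nf i w) w

/-- The one-step rewriting relation associated with a quadratic normalisation:
replace some non-normal length-two factor `ab` by `N̄(ab)`. -/
def Rw (N : List α → List α) (u v : List α) : Prop :=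
  ∃ (p s : List α) (x y : α),
    u = p ++ [x, y] ++ s ∧ N [x, y] ≠ [x, y] ∧ v = p ++ N [x, y] ++ s

section Domino

open Relation

/-- The pair `x, y` is fixed by the two-letter map `(x, y) ↦ (f x y, g x y)`. -/
def IsNormalPair (f g : α → α → α) (x y : α) : Prop :=
  f x y = x ∧ g x y = y

/-- The properties of a two-letter normalisation of breadth `(4,3)` that bound its rewriting
sequences: normalised pairs are normal, the right domino rule holds, and the letter carried
through a word does not depend on rewritings of this word. -/
structure IsDominoSystem (f g : α → α → α) : Prop where
  idem : ∀ x y, IsNormalPair f g (f x y) (g x y)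
  domino : ∀ x y z, IsNormalPair f g x y → IsNormalPair f g (g x (f y z)) (g y z)
  carry_eq : ∀ l x y, g (g l x) y = g (g l (f x y)) (g x y)

/-- One rewriting step: replace a non-normal factor `xy` by `f x y, g x y`. -/
inductive Step (f g : α → α → α) : List α → List α → Prop
  | head {x y : α} (s : List α) (h : ¬ IsNormalPair f g x y) :
      Step f g (x :: y :: s) (f x y :: g x y :: s)
  | cons (z : α) {u v : List α} (h : Step f g u v) : Step f g (z :: u) (z :: v)

/-- The letter obtained by carrying `a` through a word from left to right. -/
def carry (g : α → α → α) : α → List α → α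
  | a, [] => a
  | a, b :: r => carry g (g a b) r

/-- The word left behind when `a` is carried through a word from left to right. -/
def residue (f g : α → α → α) : α → List α → List α
  | _, [] => []
  | a, b :: r => f a b :: residue f g (g a b) r

/-- Every elementary move of `a` through the word is a rewriting step. -/
def Crosses (f g : α → α → α) : α → List α → Prop
  | _, [] => True
  | a, b :: r => ¬ IsNormalPair f g a b ∧ Crosses f g (g a b) r

/-- Each letter of the word, carried to its end, forms a normal pair with `c`. -/
def SuffixesNormal (f g : α → α → α) (c : α) : List α → Prop
  | [] => True
  | y :: t => IsNormalPair f g (carry g y t) c ∧ SuffixesNormal f g c t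

/-- The largest number of letters that `x` can cross in a word reachable from `u`. -/
noncomputable def crossing (f g : α → α → α) (x : α) (u : List α) : ℕ :=
  sSup {m | ∃ v₁ v₂, ReflTransGen (Step f g) u (v₁ ++ v₂) ∧ Crosses f g x v₁ ∧ v₁.length = m}

/-- A quantity that decreases along rewriting steps. -/
noncomputable def potential (f g : α → α → α) : List α → ℕ
  | [] => 0
  | x :: u => potential f g u + (2 ^ crossing f g x u - 1)

variable {f g : α → α → α}

theorem carry_append (a : α) (u v : List α) :
    carry g a (u ++ v) = carry g (carry g a u) v := by
  induction u generalizing a with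
  | nil => rfl
  | cons b u ih => exact ih _

theorem residue_append (a : α) (u v : List α) :
    residue f g a (u ++ v) = residue f g a u ++ residue f g (carry g a u) v := by
  induction u generalizing a with
  | nil => rfl
  | cons b u ih => simp [residue, carry, ih]

theorem crosses_append (a : α) (u v : List α) :
    Crosses f g a (u ++ v) ↔ Crosses f g a u ∧ Crosses f g (carry g a u) v := by
  induction u generalizing a with
  | nil => simp [Crosses, carry]
  | cons b u ih => simp [Crosses, carry, ih, and_assoc]

theorem SuffixesNormal.isNormalPair_last {c y : α} {q : List α}
    (h : SuffixesNormal f g c (q ++ [y])) : IsNormalPair f g y c := by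
  induction q with
  | nil => exact h.1
  | cons b q ih => exact ih h.2

theorem Step.length_eq {u v : List α} (h : Step f g u v) : v.length = u.length := by
  induction h with
  | head => rfl
  | cons z _ ih => simp [ih]

theorem Step.append_left (p : List α) {u v : List α} (h : Step f g u v) :
    Step f g (p ++ u) (p ++ v) := by
  induction p with
  | nil => exact h
  | cons z p ih => exact .cons z ih

theorem Step.append_right {u v : List α} (h : Step f g u v) (s : List α) :
    Step f g (u ++ s) (v ++ s) := by
  induction h with
  | head t h => exact .head (t ++ s) h
  | cons z _ ih => exact .cons z ih

theorem Step.append_cons_cases {q r v : List α} {c : α} (h : Step f g (q ++ c :: r) v) :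
    (∃ q', Step f g q q' ∧ v = q' ++ c :: r) ∨
    (∃ q₀ y, q = q₀ ++ [y] ∧ ¬ IsNormalPair f g y c) ∨
    (∃ b s, r = b :: s ∧ ¬ IsNormalPair f g c b ∧ v = q ++ f c b :: g c b :: s) ∨
    ∃ r', Step f g r r' ∧ v = q ++ c :: r' := by
  induction q generalizing v with
  | nil =>
    cases h with
    | head s h => exact .inr (.inr (.inl ⟨_, _, rfl, h, rfl⟩))
    | cons _ h => exact .inr (.inr (.inr ⟨_, h, rfl⟩))
  | cons x q ih =>
    generalize hw : x :: q ++ c :: r = w at h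
    cases h with
    | @head a b s h =>
      rw [List.cons_append, List.cons.injEq] at hw
      obtain ⟨rfl, hw⟩ := hw
      cases q with
      | nil =>
        obtain ⟨rfl, -⟩ := List.cons.inj hw
        exact .inr (.inl ⟨[], x, rfl, h⟩)
      | cons y q =>
        obtain ⟨rfl, rfl⟩ := List.cons.inj hw
        exact .inl ⟨_, .head q h, rfl⟩
    | cons z h =>
      obtain ⟨rfl, rfl⟩ := List.cons.inj hw
      rcases ih h with ⟨q', hq, rfl⟩ | ⟨q₀, y, rfl, hy⟩ | ⟨b, s, rfl, hb, rfl⟩ | ⟨r', hr, rfl⟩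
      · exact .inl ⟨x :: q', .cons x hq, rfl⟩
      · exact .inr (.inl ⟨x :: q₀, y, rfl, hy⟩)
      · exact .inr (.inr (.inl ⟨b, s, rfl, hb, rfl⟩))
      · exact .inr (.inr (.inr ⟨r', hr, rfl⟩))

theorem length_eq_of_reflTransGen {u v : List α} (h : ReflTransGen (Step f g) u v) :
    v.length = u.length := by
  induction h with
  | refl => rfl
  | tail _ h ih => rw [h.length_eq, ih]

namespace IsDominoSystem

theorem carry_step (H : IsDominoSystem f g) (l : α) {u v : List α} (h : Step f g u v) :
    carry g l u = carry g l v := by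
  induction h generalizing l with
  | head s h => simp only [carry, ← H.carry_eq]
  | cons z _ ih => exact ih _

theorem carry_reach (H : IsDominoSystem f g) (l : α) {u v : List α}
    (h : ReflTransGen (Step f g) u v) : carry g l u = carry g l v := by
  induction h with
  | refl => rfl
  | tail _ h ih => rw [ih, H.carry_step l h]

theorem isNormalPair_carry (H : IsDominoSystem f g) {x a : α} (h : IsNormalPair f g x a)
    (r : List α) :
    IsNormalPair f g (carry g x (residue f g a r)) (carry g a r) := by
  induction r generalizing x a with
  | nil => exact h
  | cons b r ih => exact ih (H.domino x a b h)

theorem suffixesNormal_residue (H : IsDominoSystem f g) (a : α) (r : List α) :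
    SuffixesNormal f g (carry g a r) (residue f g a r) := by
  induction r generalizing a with
  | nil => trivial
  | cons b r ih => exact ⟨H.isNormalPair_carry (H.idem a b) r, ih _⟩

theorem suffixesNormal_step (H : IsDominoSystem f g) {c : α} {u v : List α}
    (h : Step f g u v) (hu : SuffixesNormal f g c u) : SuffixesNormal f g c v := by
  induction h with
  | head s h =>
    refine ⟨?_, hu.1, hu.2.2⟩
    simpa only [carry, (H.idem _ _).2] using hu.1
  | cons z h ih => exact ⟨H.carry_step z h ▸ hu.1, ih hu.2⟩

theorem suffixesNormal_reach (H : IsDominoSystem f g) {c : α} {u v : List α}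
    (h : ReflTransGen (Step f g) u v) (hu : SuffixesNormal f g c u) :
    SuffixesNormal f g c v := by
  induction h with
  | refl => exact hu
  | tail _ h ih => exact H.suffixesNormal_step h ih

/-- In a word reachable from `a :: r`, the first letter `a` has crossed some `r₁`, leaving behind
a word reachable from `residue f g a r₁`. -/
theorem exists_of_reach_cons (H : IsDominoSystem f g) {a : α} {r v : List α}
    (h : ReflTransGen (Step f g) (a :: r) v) :
    ∃ q r₁ r₂, v = q ++ carry g a r₁ :: r₂ ∧ ReflTransGen (Step f g) r (r₁ ++ r₂) ∧
      q.length = r₁.length ∧ Crosses f g a r₁ ∧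
      ReflTransGen (Step f g) (residue f g a r₁) q := by
  induction h with
  | refl => exact ⟨[], [], r, rfl, .refl, rfl, trivial, .refl⟩
  | tail _ h ih =>
    obtain ⟨q, r₁, r₂, rfl, hr, hl, hc, hq⟩ := ih
    rcases h.append_cons_cases with
      ⟨q', hq', rfl⟩ | ⟨q₀, y, rfl, hy⟩ | ⟨b, s, rfl, hb, rfl⟩ | ⟨r', hr', rfl⟩
    · exact ⟨q', r₁, r₂, rfl, hr, hq'.length_eq.trans hl, hc, hq.tail hq'⟩
    · exact (hy (H.suffixesNormal_reach hq (H.suffixesNormal_residue a r₁)).isNormalPair_last).elim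
    · refine ⟨q ++ [f (carry g a r₁) b], r₁ ++ [b], s, ?_, by simpa using hr, by simp [hl],
        (crosses_append _ _ _).2 ⟨hc, hb, trivial⟩, ?_⟩
      · simp [carry_append, carry]
      · rw [residue_append]
        exact hq.lift (· ++ [f (carry g a r₁) b]) fun _ _ h => h.append_right _
    · exact ⟨q, r₁, r', rfl, hr.tail (hr'.append_left r₁), hl, hc, hq⟩

end IsDominoSystem

theorem le_length_of_mem_crossing {x : α} {u : List α} {m : ℕ}
    (h : m ∈ {m | ∃ v₁ v₂, ReflTransGen (Step f g) u (v₁ ++ v₂) ∧ Crosses f g x v₁ ∧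
      v₁.length = m}) : m ≤ u.length := by
  obtain ⟨v₁, v₂, hv, -, rfl⟩ := h
  rw [← length_eq_of_reflTransGen hv]
  simp

theorem length_le_crossing {x : α} {u v₁ v₂ : List α}
    (hv : ReflTransGen (Step f g) u (v₁ ++ v₂)) (hc : Crosses f g x v₁) :
    v₁.length ≤ crossing f g x u :=
  le_csSup ⟨u.length, fun _ => le_length_of_mem_crossing⟩ ⟨v₁, v₂, hv, hc, rfl⟩

theorem exists_length_eq_crossing (f g : α → α → α) (x : α) (u : List α) :
    ∃ v₁ v₂, ReflTransGen (Step f g) u (v₁ ++ v₂) ∧ Crosses f g x v₁ ∧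
      v₁.length = crossing f g x u :=
  Nat.sSup_mem (s := {m | ∃ v₁ v₂, ReflTransGen (Step f g) u (v₁ ++ v₂) ∧ Crosses f g x v₁ ∧
    v₁.length = m}) ⟨0, [], u, .refl, trivial, rfl⟩ ⟨u.length, fun _ => le_length_of_mem_crossing⟩

theorem crossing_le_length (f g : α → α → α) (x : α) (u : List α) :
    crossing f g x u ≤ u.length :=
  le_length_of_mem_crossing (exists_length_eq_crossing f g x u)

theorem Step.crossing_le {u v : List α} (h : Step f g u v) (x : α) :
    crossing f g x v ≤ crossing f g x u := by
  obtain ⟨v₁, v₂, hv, hc, hl⟩ := exists_length_eq_crossing f g x v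
  exact hl ▸ length_le_crossing (hv.head h) hc

theorem crossing_lt_crossing_cons {x a : α} (h : ¬ IsNormalPair f g x a) (r : List α) :
    crossing f g (g x a) r < crossing f g x (a :: r) := by
  obtain ⟨v₁, v₂, hv, hc, hl⟩ := exists_length_eq_crossing f g (g x a) r
  have hv' : ReflTransGen (Step f g) (a :: r) ((a :: v₁) ++ v₂) :=
    hv.lift (a :: ·) fun _ _ h => Step.cons a h
  have := length_le_crossing (x := x) hv' ⟨h, hc⟩
  rw [← hl]
  simpa using this

namespace IsDominoSystem

theorem crossing_cons_le (H : IsDominoSystem f g) {x a : α} (h : IsNormalPair f g x a)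
    (r : List α) : crossing f g x (a :: r) ≤ crossing f g a r := by
  obtain ⟨v₁, v₂, hv, hc, hl⟩ := exists_length_eq_crossing f g x (a :: r)
  obtain ⟨q, r₁, r₂, hqr, hr, hlen, hcr, hq⟩ := H.exists_of_reach_cons hv
  rw [← hl]
  rcases List.append_eq_append_iff.1 hqr with ⟨s, rfl, -⟩ | ⟨s, rfl, hs⟩
  · calc v₁.length ≤ r₁.length := by rw [← hlen]; simp
      _ ≤ crossing f g a r := length_le_crossing hr hcr
  · cases s with
    | nil => simpa [hlen] using length_le_crossing hr hcr
    | cons c s =>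
      obtain ⟨rfl, -⟩ := List.cons.inj hs
      refine (((crosses_append _ _ _).1 hc).2.1 ?_).elim
      rw [← H.carry_reach x hq]
      exact H.isNormalPair_carry h r₁

theorem potential_lt (H : IsDominoSystem f g) {u v : List α} (h : Step f g u v) :
    potential f g v < potential f g u := by
  induction h with
  | @head x y s h =>
    have h₁ := crossing_lt_crossing_cons h s
    have h₂ := H.crossing_cons_le (H.idem x y) s
    have h₃ := Nat.pow_le_pow_right two_pos h₁
    have h₄ := Nat.pow_le_pow_right two_pos h₂
    have h₅ := Nat.one_le_two_pow (n := crossing f g y s)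
    have h₆ := Nat.one_le_two_pow (n := crossing f g (f x y) (g x y :: s))
    rw [Nat.pow_succ] at h₃
    simp only [potential]
    omega
  | cons z h ih =>
    have := Nat.pow_le_pow_right two_pos (h.crossing_le z)
    simp only [potential]
    omega

theorem le_potential (H : IsDominoSystem f g) {n : ℕ} {w : ℕ → List α}
    (hw : ∀ i < n, Step f g (w i) (w (i + 1))) : n ≤ potential f g (w 0) := by
  induction n generalizing w with
  | zero => exact Nat.zero_le _
  | succ n ih =>
    have h₁ := ih (w := fun i => w (i + 1)) fun i hi => hw (i + 1) (by omega)
    have h₂ := H.potential_lt (hw 0 n.succ_pos)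
    simp only [Nat.zero_add] at h₁ h₂
    omega

end IsDominoSystem

theorem potential_add_length_lt (f g : α → α → α) (w : List α) :
    potential f g w + w.length < 2 ^ w.length := by
  induction w with
  | nil => simp [potential]
  | cons x u ih =>
    have h₁ := Nat.pow_le_pow_right two_pos (crossing_le_length f g x u)
    have h₂ := Nat.one_le_two_pow (n := crossing f g x u)
    simp only [potential, List.length_cons, Nat.pow_succ]
    omega

/-- Rewriting sequences of a domino system starting from a word of length `p` have length at most
`2 ^ p - p - 1`. -/
theorem IsDominoSystem.length_bound (H : IsDominoSystem f g) {n : ℕ} {w : ℕ → List α}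
    (hw : ∀ i < n, Step f g (w i) (w (i + 1))) :
    n ≤ 2 ^ (w 0).length - (w 0).length - 1 := by
  have h₁ := H.le_potential hw
  have h₂ := potential_add_length_lt f g (w 0)
  omega

theorem Step.of_factor (p s : List α) {x y : α} (h : ¬ IsNormalPair f g x y) :
    Step f g (p ++ x :: y :: s) (p ++ f x y :: g x y :: s) :=
  (Step.head s h).append_left p

end Domino

section Normalisation

variable {N : List α → List α} {f g : α → α → α}

theorem Rw.step (hN : ∀ x y, N [x, y] = [f x y, g x y]) {u v : List α} (h : Rw N u v) :
    Step f g u v := by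
  obtain ⟨p, s, x, y, rfl, hne, rfl⟩ := h
  rw [hN] at hne ⊢
  have hxy : ¬ IsNormalPair f g x y := fun h => hne (by rw [h.1, h.2])
  simpa using Step.of_factor p s hxy

theorem Rw.step_reverse (hN : ∀ x y, N [x, y] = [f x y, g x y]) {u v : List α} (h : Rw N u v) :
    Step (fun x y => g y x) (fun x y => f y x) u.reverse v.reverse := by
  obtain ⟨p, s, x, y, rfl, hne, rfl⟩ := h
  rw [hN] at hne ⊢
  have hxy : ¬ IsNormalPair (fun x y => g y x) (fun x y => f y x) y x :=
    fun h => hne (congrArg₂ (fun a b => [a, b]) h.2 h.1)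
  simpa using Step.of_factor s.reverse p.reverse hxy

theorem isNormalPair_normalisation_pair (hN : ∀ x y, N [x, y] = [f x y, g x y])
    (hidem : ∀ w, w ≠ [] → N (N w) = N w) (x y : α) :
    IsNormalPair f g (f x y) (g x y) := by
  have h := hidem [x, y] (by simp)
  rw [hN, hN] at h
  simpa [IsNormalPair] using h

theorem isNormalPair_normalisation_triple (hN : ∀ x y, N [x, y] = [f x y, g x y])
    (hidem : ∀ w, w ≠ [] → N (N w) = N w)
    (hquad : ∀ w, w ≠ [] →
      (N w = w ↔ ∀ p s : List α, ∀ x y : α, w = p ++ [x, y] ++ s → N [x, y] = [x, y]))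
    {x y z a b c : α} (h : N [x, y, z] = [a, b, c]) :
    IsNormalPair f g a b ∧ IsNormalPair f g b c := by
  have h₁ := hidem [x, y, z] (by simp)
  rw [h] at h₁
  have h₂ := (hquad [a, b, c] (by simp)).1 h₁
  have h₃ := h₂ [] [c] a b rfl
  have h₄ := h₂ [a] [] b c rfl
  rw [hN] at h₃ h₄
  exact ⟨by simpa [IsNormalPair] using h₃, by simpa [IsNormalPair] using h₄⟩

theorem isDominoSystem_of_breadth_right (hN : ∀ x y, N [x, y] = [f x y, g x y])
    (hidem : ∀ w, w ≠ [] → N (N w) = N w)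
    (hquad : ∀ w, w ≠ [] →
      (N w = w ↔ ∀ p s : List α, ∀ x y : α, w = p ++ [x, y] ++ s → N [x, y] = [x, y]))
    (hbreadth : ∀ x y z : α,
      N [x, y, z] = seqApplyL (fun a b => N [a, b]) [1, 2, 1] [x, y, z] ∧
      N [x, y, z] = seqApplyL (fun a b => N [a, b]) [2, 1, 2, 1] [x, y, z]) :
    IsDominoSystem f g where
  idem := isNormalPair_normalisation_pair hN hidem
  domino x y z hxy := by
    have h := (hbreadth x y z).1
    simp only [seqApplyL, List.foldl, applyAtL, hN, hxy.1, hxy.2, List.cons_append,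
      List.nil_append] at h
    exact (isNormalPair_normalisation_triple hN hidem hquad h).2
  carry_eq l x y := by
    have h := (hbreadth l x y).1.symm.trans (hbreadth l x y).2
    simp only [seqApplyL, List.foldl, applyAtL, hN, List.cons_append, List.nil_append] at h
    simp only [List.cons.injEq] at h
    exact h.2.2.1

theorem isDominoSystem_of_breadth_left (hN : ∀ x y, N [x, y] = [f x y, g x y])
    (hidem : ∀ w, w ≠ [] → N (N w) = N w)
    (hquad : ∀ w, w ≠ [] →
      (N w = w ↔ ∀ p s : List α, ∀ x y : α, w = p ++ [x, y] ++ s → N [x, y] = [x, y]))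
    (hbreadth : ∀ x y z : α,
      N [x, y, z] = seqApplyL (fun a b => N [a, b]) [2, 1, 2] [x, y, z] ∧
      N [x, y, z] = seqApplyL (fun a b => N [a, b]) [1, 2, 1, 2] [x, y, z]) :
    IsDominoSystem (fun x y => g y x) (fun x y => f y x) where
  idem x y := (isNormalPair_normalisation_pair hN hidem y x).symm
  domino x y z hxy := by
    obtain ⟨h₁, h₂⟩ := hxy
    have h := (hbreadth z y x).1
    simp only [seqApplyL, List.foldl, applyAtL, hN, h₁, h₂, List.cons_append,
      List.nil_append] at h
    exact (isNormalPair_normalisation_triple hN hidem hquad h).1.symm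
  carry_eq l x y := by
    have h := (hbreadth y x l).1.symm.trans (hbreadth y x l).2
    simp only [seqApplyL, List.foldl, applyAtL, hN, List.cons_append, List.nil_append] at h
    simp only [List.cons.injEq] at h
    exact h.1

end Normalisation

/-- for a quadratic normalisation `(Γ,N)` of breadth `(3,4)` or
`(4,3)`, every rewriting sequence starting from a word of length `p` has length at most
`2^p − p − 1`. -/
theorem rewriting_length_bound_breadth_34
    {Γ : Type} [Fintype Γ] [Nonempty Γ]
    (N : List Γ → List Γ)
    (hlen : ∀ w : List Γ, (N w).length = w.length)
    (hone : ∀ x : Γ, N [x] = [x])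
    (habs : ∀ u w v : List Γ, w ≠ [] → N (u ++ N w ++ v) = N (u ++ w ++ v))
    (hquad₁ : ∀ w : List Γ, w ≠ [] →
      (N w = w ↔ ∀ p s : List Γ, ∀ x y : Γ, w = p ++ [x, y] ++ s → N [x, y] = [x, y]))
    (hquad₂ : ∀ w : List Γ, w ≠ [] →
      ∃ l : List ℕ, N w = seqApplyL (fun x y => N [x, y]) l w)
    (hbreadth :
      (∀ x y z : Γ,
        N [x, y, z] = seqApplyL (fun a b => N [a, b]) [2, 1, 2] [x, y, z] ∧
        N [x, y, z] = seqApplyL (fun a b => N [a, b]) [1, 2, 1, 2] [x, y, z]) ∨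
      (∀ x y z : Γ,
        N [x, y, z] = seqApplyL (fun a b => N [a, b]) [1, 2, 1] [x, y, z] ∧
        N [x, y, z] = seqApplyL (fun a b => N [a, b]) [2, 1, 2, 1] [x, y, z])) :
    ∀ (p n : ℕ) (f : ℕ → List Γ), (f 0).length = p →
      (∀ i < n, Rw N (f i) (f (i + 1))) → n ≤ 2 ^ p - p - 1 := by
  intro p n w hp hw
  have hidem : ∀ w, w ≠ [] → N (N w) = N w := fun w hw => by simpa using habs [] w [] hw
  have hpair : ∀ x y, ∃ a b, N [x, y] = [a, b] := fun x y =>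
    List.length_eq_two.1 (hlen [x, y])
  choose f g hN using hpair
  subst hp
  rcases hbreadth with hb | hb
  · have h := (isDominoSystem_of_breadth_left hN hidem hquad₁ hb).length_bound
      (w := fun i => (w i).reverse) fun i hi => (hw i hi).step_reverse hN
    simpa using h
  · exact (isDominoSystem_of_breadth_right hN hidem hquad₁ hb).length_bound
      fun i hi => (hw i hi).step hN

end Stmt9
end
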